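/- Let P be an Eulerian poset whose cd-index Ψ(P) has nonnegative integer coefficients when expressed in the monomial basis of ℤ⟨c,d⟩. Then the ab-index Ψ(T(P)) of the Tchebyshev transform T(P) is also a cd-polynomial with nonnegative integer coefficients. -/

import Mathlib

open scoped TensorProduct

noncomputable section

namespace Tcheb

/-! ### The algebra `R⟨a,b⟩` of ab-polynomials -/

/-- Words in the two noncommuting letters `a` (encoded `true`) and `b` (encoded `false`). -/
abbrev ABWord : Type := FreeMonoid Bool

/-- The ring `R⟨a,b⟩` of polynomials in two noncommuting variables `a` and `b`. -/
abbrev AB (R : Type) [CommRing R] : Type := MonoidAlgebra R ABWord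

variable (R : Type) [CommRing R]

/-- The ab-monomial corresponding to a word. -/
def word (l : List Bool) : AB R := MonoidAlgebra.of R ABWord (FreeMonoid.ofList l)

/-- The variable `a`. -/
def av : AB R := word R [true]
/-- The variable `b`. -/
def bv : AB R := word R [false]
/-- `c = a + b`. -/
def cv : AB R := av R + bv R
/-- `d = ab + ba`. -/
def dv : AB R := av R * bv R + bv R * av R
/-- `a - b`. -/
def ev : AB R := av R - bv R

/-- The linear map defined by prescribing values on the basis of ab-monomials. -/
def onBasis {M : Type} [AddCommMonoid M] [Module R M] (f : List Bool → M) :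
    AB R →ₗ[R] M :=
  (Finsupp.lift M R ABWord fun w => f (FreeMonoid.toList w)) ∘ₗ
    (MonoidAlgebra.coeffLinearEquiv R).toLinearMap

/-- The algebra map `A` with `A(a) = 1`, `A(b) = 0`. -/
def Amap : AB R →ₐ[R] R :=
  MonoidAlgebra.lift R R ABWord (FreeMonoid.lift fun x => if x then (1 : R) else 0)

/-- The coproduct on `R⟨a,b⟩`: on an ab-monomial `u₁ ⋯ u_k` it is
`Σ_{i=1}^k u₁ ⋯ u_{i-1} ⊗ u_{i+1} ⋯ u_k`. -/
def Delta : AB R →ₗ[R] AB R ⊗[R] AB R :=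
  onBasis R fun w => ∑ i ∈ Finset.range w.length,
    word R (w.take i) ⊗ₜ[R] word R (w.drop (i + 1))

/-- The linear map `C(u) = 2·A(u) + Σ_u A(u₍₁₎)·A(u₍₂₎)`. -/
def Cmap : AB R →ₗ[R] R :=
  2 • (Amap R).toLinearMap +
    (LinearMap.mul' R R ∘ₗ
      TensorProduct.map (Amap R).toLinearMap (Amap R).toLinearMap) ∘ₗ Delta R

/-- `κ(u) = A(u)·(a-b)^(deg u)` on homogeneous `u`, extended linearly. -/
def kappa : AB R →ₗ[R] AB R :=
  onBasis R fun w => Amap R (word R w) • ev R ^ w.length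

/-- `ν(u) = C(u)·(a-b)^(deg u)` on homogeneous `u`, extended linearly. -/
def nuMap : AB R →ₗ[R] AB R :=
  onBasis R fun w => Cmap R (word R w) • ev R ^ w.length

end Tcheb

namespace Tcheb

/-- Cutting a word into the list of segments between the (sorted) cut positions. -/
def segments : List Bool → List ℕ → List (List Bool)
  | l, [] => [l]
  | l, i :: rest => l.take i :: segments (l.drop (i + 1)) (rest.map fun j => j - (i + 1))
  termination_by _ cuts => cuts.length
  decreasing_by simp

variable (R : Type) [CommRing R]

/-- For segments `[s₁, …, s_k]` this is `ν(s₁)·b·ν(s₂)·b ⋯ b·ν(s_{k-1})·b·κ(s_k)`. -/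
def chainProd : List (List Bool) → AB R
  | [] => 1
  | [s] => kappa R (word R s)
  | s :: rest => nuMap R (word R s) * bv R * chainProd rest

/-- The Tchebyshev transform (of the first kind) on ab-polynomials:
`T(u) = Σ_{k ≥ 1} Σ_u ν(u₍₁₎)·b·ν(u₍₂₎)·b ⋯ b·ν(u₍ₖ₋₁₎)·b·κ(u₍ₖ₎)`,
where the inner sum is over the `k`-fold coproduct.  On the ab-monomial basis this
is the sum, over all sets of positions of deleted letters, of the corresponding
products over the resulting segments. -/
def Tmap : AB R →ₗ[R] AB R :=
  onBasis R fun w => ∑ S : Finset (Fin w.length),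
    chainProd R (segments w ((S.sort (· ≤ ·)).map Fin.val))

/-- The `ω` map on a word: replace each occurrence of `ab` by `2d` and all
remaining letters by `c`. -/
def omegaWord : List Bool → AB R
  | [] => 1
  | true :: false :: rest => (2 * dv R) * omegaWord rest
  | _ :: rest => cv R * omegaWord rest

/-- The `ω` map of Billera–Ehrenborg–Readdy. -/
def omegaMap : AB R →ₗ[R] AB R := onBasis R fun w => omegaWord R w

/-- The reversal involution `u ↦ u*` of ab-polynomials. -/
def revMap : AB R →ₗ[R] AB R := onBasis R fun w => word R w.reverse

/-- `H*(1) = 0` and `H*(u·a) = H*(u·b) = u`. -/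
def Hstar : AB R →ₗ[R] AB R :=
  onBasis R fun w => if w = [] then 0 else word R w.dropLast

/-- The Tchebyshev transform of the second kind `U(u) = H*(T(u·a))`. -/
def Umap : AB R →ₗ[R] AB R := Hstar R ∘ₗ Tmap R ∘ₗ LinearMap.mulRight R (av R)

/-- `σ(u) = Σ_u κ(u₍₁₎)·b·T(u₍₂₎)`. -/
def sigmaMap : AB R →ₗ[R] AB R :=
  LinearMap.mul' R (AB R) ∘ₗ
    TensorProduct.map (LinearMap.mulRight R (bv R) ∘ₗ kappa R) (Tmap R) ∘ₗ Delta R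

/-! ### Graded posets and the ab-index -/

/-- `rk` is a rank function for a bounded poset: `rk ⊥ = 0` and covers raise rank by one. -/
def IsRankFun (α : Type) [PartialOrder α] [OrderBot α] (rk : α → ℕ) : Prop :=
  rk ⊥ = 0 ∧ ∀ x y : α, x ⋖ y → rk y = rk x + 1

/-- `f` lists the elements of a chain in increasing order with respect to the
strict order relation `lt`. -/
def IsStrictChain {α : Type} (lt : α → α → Prop) {n : ℕ} (f : Fin (n + 1) → α) : Prop :=
  ∀ i j : Fin (n + 1), i < j → lt (f i) (f j)

/-- The weight of a chain `x₀ < x₁ < ⋯ < x_k`: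
`(a-b)^{ρ(x₀,x₁)-1}·b·(a-b)^{ρ(x₁,x₂)-1}·b ⋯ b·(a-b)^{ρ(x_{k-1},x_k)-1}`. -/
def chainWt {α : Type} (rk : α → ℕ) {n : ℕ} (f : Fin (n + 1) → α) : AB R :=
  (List.intersperse (bv R)
    (List.ofFn fun i : Fin n => ev R ^ (rk (f i.succ) - rk (f i.castSucc) - 1))).prod

/-- The ab-index `Ψ` of the graded poset with strict order relation `lt`, rank
function `rk`, minimum `b` and maximum `t`: the sum of the weights of all chains
from `b` to `t`. -/
def PsiRel {α : Type} (lt : α → α → Prop) (rk : α → ℕ) (b t : α) : AB R :=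
  ∑ᶠ (n : ℕ), ∑ᶠ (f : Fin (n + 1) → α)
    (_ : IsStrictChain lt f ∧ f 0 = b ∧ f (Fin.last n) = t), chainWt R rk f

end Tcheb

namespace Tcheb

/-! ### The Tchebyshev transform of a graded poset -/

section TPoset

variable (α : Type) [PartialOrder α] [BoundedOrder α]

/-- The elements `[x,y]` of the Tchebyshev transform: intervals of `P ∪ {-1̂}`,
i.e. pairs `(x,y)` with `x ∈ P ∪ {-1̂}`, `y ∈ P` and `x < y`. -/
def TPel : Type := {p : WithBot α × α // p.1 < (p.2 : WithBot α)}

/-- The underlying set of the Tchebyshev transform `T(P)`: the intervals `[x,y]`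
together with a new maximum element (`none`). -/
def TP : Type := Option (TPel α)

/-- The cover relation of the Tchebyshev transform `T(P)`:
`[x,y] ⋖ [y,w]` and `[x,y] ⋖ [x,w]` whenever `y ⋖ w` in `P`, and `[x,1̂] ⋖ 1̂_{T(P)}`. -/
inductive TPcov : TP α → TP α → Prop
  | up {x : WithBot α} {y w : α} (h1 : x < (y : WithBot α))
      (h2 : (y : WithBot α) < (w : WithBot α)) (hc : y ⋖ w) :
      TPcov (some ⟨(x, y), h1⟩) (some ⟨((y : WithBot α), w), h2⟩)
  | same {x : WithBot α} {y w : α} (h1 : x < (y : WithBot α))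
      (h2 : x < (w : WithBot α)) (hc : y ⋖ w) :
      TPcov (some ⟨(x, y), h1⟩) (some ⟨(x, w), h2⟩)
  | top {x : WithBot α} (h1 : x < ((⊤ : α) : WithBot α)) :
      TPcov (some ⟨(x, (⊤ : α)), h1⟩) none

/-- The strict order relation of `T(P)`, generated by the cover relation. -/
def TPlt : TP α → TP α → Prop := Relation.TransGen (TPcov α)

/-- The order relation of `T(P)`, generated by the cover relation. -/
def TPle : TP α → TP α → Prop := Relation.ReflTransGen (TPcov α)

/-- The minimum element `[-1̂, 0̂]` of `T(P)`. -/
def TPbot : TP α := some ⟨((⊥ : WithBot α), (⊥ : α)), WithBot.bot_lt_coe _⟩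

/-- The maximum element `1̂_{T(P)}` of `T(P)`. -/
def TPtop : TP α := none

/-- The rank function of `T(P)`: `ρ([x,y]) = ρ(y)` and `ρ(1̂_{T(P)}) = ρ(P) + 1`. -/
def TPrk (rk : α → ℕ) : TP α → ℕ
  | some p => rk p.1.2
  | none => rk (⊤ : α) + 1

theorem TPbot_ne_TPtop : TPbot α ≠ TPtop α := Option.some_ne_none _

/-- The map `z : T(P) → P ∪ {2̂}` with `z([x,y]) = y` and `z(1̂_{T(P)}) = 2̂`. -/
def zmap : TP α → WithTop α
  | some p => (p.1.2 : WithTop α)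
  | none => ⊤

/-- The number of elements of the interval `[u,v]` of `P`, for `u, v ∈ P ∪ {2̂}`. -/
def intervalCard (u v : WithTop α) : ℕ :=
  Set.ncard {t : α | u ≤ (t : WithTop α) ∧ (t : WithTop α) ≤ v}

end TPoset

/-! ### The dual diamond product -/

/-- The strict order relation of the dual diamond product
`P ◇* Q = ((P ∖ {1̂}) × (Q ∖ {1̂})) ∪ {1̂}` (with `none` the new maximum), built from
the order relations `leA, ltA` and `leB, ltB` of the two factors. -/
def dsLT {A B : Type} (leA ltA : A → A → Prop) (leB ltB : B → B → Prop) :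
    Option (A × B) → Option (A × B) → Prop
  | some p, some q => (leA p.1 q.1 ∧ leB p.2 q.2) ∧ (ltA p.1 q.1 ∨ ltB p.2 q.2)
  | some _, none => True
  | none, _ => False

/-! ### EL-labelings -/

/-- The list of edge labels along a chain (given as a list of poset elements). -/
def labelsList {α Λ : Type} (lam : α → α → Λ) (l : List α) : List Λ :=
  (l.zip l.tail).map fun p => lam p.1 p.2

/-- `l` is a maximal (saturated) chain of the interval `[x,y]` with respect to the
cover relation `cov`: it runs from `x` to `y` and every step is a cover. -/
def IsMaxChainList {α : Type} (cov : α → α → Prop) (x y : α) (l : List α) : Prop :=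
  l.head? = some x ∧ l.getLast? = some y ∧ l.Chain' cov

/-- An `EL`-labeling of the poset whose cover relation is `cov`, with labels in the
linearly ordered set `(Λ, lle, llt)`: every interval has a unique rising maximal
chain, which moreover is lexicographically least among all maximal chains of the
interval. -/
def IsELLabeling (α Λ : Type) (lle llt : Λ → Λ → Prop)
    (cov : α → α → Prop) (lam : α → α → Λ) : Prop :=
  ∀ x y : α, Relation.ReflTransGen cov x y →
    ∃ l : List α, (IsMaxChainList cov x y l ∧ (labelsList lam l).Chain' lle) ∧
      (∀ l' : List α, IsMaxChainList cov x y l' →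
        (labelsList lam l').Chain' lle → l' = l) ∧
      (∀ l' : List α, IsMaxChainList cov x y l' →
        labelsList lam l = labelsList lam l' ∨
          List.Lex llt (labelsList lam l) (labelsList lam l'))

/-! ### Eulerian posets -/

/-- A graded poset is Eulerian if every nontrivial interval `[x,y]` has the
same number of elements of even rank as of odd rank. -/
def IsEulerian (α : Type) [PartialOrder α] (rk : α → ℕ) : Prop :=
  ∀ x y : α, x < y →
    Set.ncard {z : α | x ≤ z ∧ z ≤ y ∧ Even (rk z)} =
      Set.ncard {z : α | x ≤ z ∧ z ≤ y ∧ ¬ Even (rk z)}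

/-! ### The face lattice of the crosspolytope -/

/-- A face of the `n`-dimensional crosspolytope: a partial sign vector, i.e. the
pair `(S, ε)` of a subset `S ⊆ {1,…,n}` (the set of coordinates where the function
takes a value `some`) together with a sign function `ε` on `S`. -/
def CrossEl (n : ℕ) : Type := Fin n → Option Bool

/-- `(S,ε) ≤ (T,δ)` iff `S ⊆ T` and `δ` restricted to `S` is `ε`. -/
instance (n : ℕ) : PartialOrder (CrossEl n) where
  le f g := ∀ i s, f i = some s → g i = some s
  le_refl f i s h := h
  le_trans f g h fg gh i s hi := gh i s (fg i s hi)
  le_antisymm f g fg gf := by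
    funext i
    cases hf : f i with
    | some s => exact (fg i s hf).symm
    | none =>
      cases hg : g i with
      | some s => exact absurd (gf i s hg) (by simp [hf])
      | none => rfl

/-- The face lattice of the `n`-dimensional crosspolytope: all partial sign
vectors together with a new maximum element. -/
abbrev Cross (n : ℕ) : Type := WithTop (CrossEl n)

/-- The rank function of the face lattice of the crosspolytope:
`ρ(S,ε) = |S|` and the maximum has rank `n + 1`. -/
def crossRk (n : ℕ) : Cross n → ℕ
  | none => n + 1
  | some f => (Finset.univ.filter fun i : Fin n => (f i).isSome).card

/-- The minimal element (the empty face) of the crosspolytope face lattice. -/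
def crossBot (n : ℕ) : Cross n := WithTop.some (fun _ => none)

/-- The maximal element of the crosspolytope face lattice. -/
def crossTop (n : ℕ) : Cross n := ⊤

/-! ### Quasisymmetric functions -/

/-- The monomial quasisymmetric function `M_{(p₁,…,p_k)}`, as a formal power
series in the countably many commuting variables `t₁, t₂, …` (indexed by `ℕ`). -/
def MQ (R : Type) [CommRing R] (ps : List ℕ) : MvPowerSeries ℕ R :=
  fun m => if ((m.support.sort (· ≤ ·)).map fun i => m i) = ps then 1 else 0

/-- The `t`-part of a monomial in the variables `s` (index `none`) and
`t₁, t₂, …` (indices `some i`). -/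
def tpart (m : Option ℕ →₀ ℕ) : ℕ →₀ ℕ :=
  Finsupp.comapDomain some m (Option.some_injective ℕ).injOn

/-- The type B monomial quasisymmetric function `s^p · M_{(p₁,…,p_k)}`, a formal
power series in the variables `s` (index `none`) and `t₁, t₂, …` (indices `some i`). -/
def MB (R : Type) [CommRing R] (p : ℕ) (ps : List ℕ) : MvPowerSeries (Option ℕ) R :=
  fun m => if m none = p ∧
      (((tpart m).support.sort (· ≤ ·)).map fun i => tpart m i) = ps then 1 else 0

/-- The quasisymmetric function `F(P)` of the graded poset with strict order
relation `lt`, rank function `rk`, minimum `b` and maximum `t`: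
`F(P) = Σ_c M_{(ρ(x₀,x₁),…,ρ(x_{k-1},x_k))}` over all chains `c` from `b` to `t`. -/
def FQ (R : Type) [CommRing R] {α : Type} (lt : α → α → Prop) (rk : α → ℕ)
    (b t : α) : MvPowerSeries ℕ R :=
  ∑ᶠ (n : ℕ), ∑ᶠ (f : Fin (n + 1) → α)
    (_ : IsStrictChain lt f ∧ f 0 = b ∧ f (Fin.last n) = t),
    MQ R (List.ofFn fun i : Fin n => rk (f i.succ) - rk (f i.castSucc))

/-- The type B quasisymmetric function `F_B(P) = Σ_{0̂ < x ≤ 1̂} s^{ρ(x)-1}·F([x,1̂])`,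
written as a sum over all chains `0̂ < x₀ < x₁ < ⋯ < x_k = 1̂` of
`s^{ρ(x₀)-1}·M_{(ρ(x₀,x₁),…,ρ(x_{k-1},x_k))}`. -/
def FB (R : Type) [CommRing R] {α : Type} (lt : α → α → Prop) (rk : α → ℕ)
    (b t : α) : MvPowerSeries (Option ℕ) R :=
  ∑ᶠ (n : ℕ), ∑ᶠ (f : Fin (n + 1) → α)
    (_ : IsStrictChain lt f ∧ lt b (f 0) ∧ f (Fin.last n) = t),
    MB R (rk (f 0) - 1) (List.ofFn fun i : Fin n => rk (f i.succ) - rk (f i.castSucc))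

/-! ### Characters and the chain maps -/

/-- A character on `k⟨a,b⟩`: a linear functional which is multiplicative with
respect to Cartesian products of graded posets (of rank at least 1). -/
def IsCharacter (k : Type) [Field k] (G : AB k →ₗ[k] k) : Prop :=
  ∀ (α β : Type) [Fintype α] [Fintype β] [PartialOrder α] [PartialOrder β]
    [BoundedOrder α] [BoundedOrder β], ∀ (rkα : α → ℕ) (rkβ : β → ℕ),
    IsRankFun α rkα → IsRankFun β rkβ → 1 ≤ rkα ⊤ → 1 ≤ rkβ ⊤ →
    G (PsiRel k (· < ·) (fun p : α × β => rkα p.1 + rkβ p.2)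
        ((⊥ : α), (⊥ : β)) ((⊤ : α), (⊤ : β))) =
      G (PsiRel k (· < ·) rkα ⊥ ⊤) * G (PsiRel k (· < ·) rkβ ⊥ ⊤)

/-- The quasisymmetric function image `g̃F(P)` of the chain map of the second kind:
`Σ_c G(Ψ([x₀,x₁])) ⋯ G(Ψ([x_{k-1},x_k])) · M_{(ρ(x₀,x₁),…,ρ(x_{k-1},x_k))}`,
summed over all chains `c = {b = x₀ < ⋯ < x_k = t}`. -/
def gtF (k : Type) [Field k] (G : AB k →ₗ[k] k) {α : Type} (lt : α → α → Prop)
    (rk : α → ℕ) (b t : α) : MvPowerSeries ℕ k :=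
  ∑ᶠ (n : ℕ), ∑ᶠ (f : Fin (n + 1) → α)
    (_ : IsStrictChain lt f ∧ f 0 = b ∧ f (Fin.last n) = t),
    (∏ i : Fin n, G (PsiRel k lt rk (f i.castSucc) (f i.succ))) •
      MQ k (List.ofFn fun i : Fin n => rk (f i.succ) - rk (f i.castSucc))

/-- The type B quasisymmetric function image `gF_B(P) = Σ_{0̂ < x ≤ 1̂}
s^{ρ(x)-1}·g̃F([x,1̂])` of the chain map of the first kind, written as a sum over
all chains `0̂ < x₀ < ⋯ < x_k = 1̂`. -/
def gFB (k : Type) [Field k] (G : AB k →ₗ[k] k) {α : Type} (lt : α → α → Prop)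
    (rk : α → ℕ) (b t : α) : MvPowerSeries (Option ℕ) k :=
  ∑ᶠ (n : ℕ), ∑ᶠ (f : Fin (n + 1) → α)
    (_ : IsStrictChain lt f ∧ lt b (f 0) ∧ f (Fin.last n) = t),
    (∏ i : Fin n, G (PsiRel k lt rk (f i.castSucc) (f i.succ))) •
      MB k (rk (f 0) - 1) (List.ofFn fun i : Fin n => rk (f i.succ) - rk (f i.castSucc))

/-- The space of homogeneous ab-polynomials of degree `n`. -/
def ABhomog (k : Type) [Field k] (n : ℕ) : Submodule k (AB k) :=
  Submodule.span k {x : AB k | ∃ w : List Bool, w.length = n ∧ x = word k w}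

/-! ### Recursion for the ab-index -/

section Recursion

open Classical

variable {β : Type} [Fintype β] (lt : β → β → Prop) (rk : β → ℕ)

/-- The contribution of the chains of length `n` to the ab-index. -/
def lvl (t : β) (n : ℕ) (x : β) : AB ℤ :=
  ∑ f : Fin (n + 1) → β,
    if IsStrictChain lt f ∧ f 0 = x ∧ f (Fin.last n) = t then chainWt ℤ rk f else 0

theorem PsiRel_eq_lvl (x t : β) : PsiRel ℤ lt rk x t = ∑ᶠ n : ℕ, lvl lt rk t n x := by
  unfold PsiRel lvl
  refine finsum_congr fun n => ?_
  rw [finsum_eq_sum_of_fintype]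
  refine Finset.sum_congr rfl fun f _ => ?_
  rw [finsum_eq_if]

theorem strictChain_cons (htr : ∀ x y z, lt x y → lt y z → lt x z) {n : ℕ} (x : β)
    (f : Fin (n + 1) → β) :
    IsStrictChain lt (Fin.cons x f : Fin (n + 2) → β) ↔ lt x (f 0) ∧ IsStrictChain lt f := by
  constructor
  · intro h
    refine ⟨by simpa using h 0 1 (by simp), fun i j hij => ?_⟩
    simpa using h i.succ j.succ (by simpa using hij)
  · rintro ⟨h0, h⟩ i j hij
    induction j using Fin.cases with
    | zero => simp at hij
    | succ j =>
      induction i using Fin.cases with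
      | zero =>
        simp only [Fin.cons_zero, Fin.cons_succ]
        rcases Fin.eq_zero_or_eq_succ j with rfl | ⟨k, rfl⟩
        · exact h0
        · exact htr _ _ _ h0 (h _ _ (Fin.succ_pos k))
      | succ i =>
        simp only [Fin.cons_succ]
        exact h _ _ (by simpa using hij)

theorem chainWt_cons_zero (x : β) (f : Fin 1 → β) :
    chainWt ℤ rk (Fin.cons x f : Fin 2 → β) = ev ℤ ^ (rk (f 0) - rk x - 1) * chainWt ℤ rk f := by
  simp [chainWt, List.ofFn_succ, Fin.cons]

theorem chainWt_cons_succ {n : ℕ} (x : β) (f : Fin (n + 2) → β) :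
    chainWt ℤ rk (Fin.cons x f : Fin (n + 3) → β) =
      ev ℤ ^ (rk (f 0) - rk x - 1) * (bv ℤ * chainWt ℤ rk f) := by
  unfold chainWt
  rw [List.ofFn_succ]
  have h : (List.ofFn fun i : Fin (n + 1) => ev ℤ ^
      (rk ((Fin.cons x f : Fin (n + 3) → β) i.succ.succ) -
        rk ((Fin.cons x f : Fin (n + 3) → β) i.succ.castSucc) - 1)) =
      List.ofFn fun i : Fin (n + 1) => ev ℤ ^ (rk (f i.succ) - rk (f i.castSucc) - 1) := by
    congr 1
  rw [h, List.ofFn_succ, List.intersperse_cons_cons, List.prod_cons, List.prod_cons]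
  rfl

theorem lvl_zero (t x : β) : lvl lt rk t 0 x = if x = t then 1 else 0 := by
  unfold lvl
  rw [Fintype.sum_equiv (Equiv.funUnique (Fin 1) β) _
    (fun y => if y = x ∧ y = t then (1 : AB ℤ) else 0)]
  · by_cases h : x = t
    · subst h; simp
    · rw [if_neg h]
      refine Finset.sum_eq_zero fun y _ => if_neg ?_
      rintro ⟨rfl, h'⟩; exact h h'
  · intro f
    have h1 : IsStrictChain lt f := by
      intro i j hij
      omega
    have h2 : chainWt ℤ rk f = 1 := by simp [chainWt]
    simp [h1, h2]

theorem lvl_succ (htr : ∀ x y z, lt x y → lt y z → lt x z) (hirr : ∀ x, ¬ lt x x)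
    (t : β) (n : ℕ) (x : β) :
    lvl lt rk t (n + 1) x = ∑ y, if lt x y then
      ev ℤ ^ (rk y - rk x - 1) * ((if y = t then 1 else bv ℤ) * lvl lt rk t n y) else 0 := by
  have h1 : lvl lt rk t (n + 1) x = ∑ x' : β, ∑ f : Fin (n + 1) → β,
      if (lt x' (f 0) ∧ IsStrictChain lt f) ∧ x' = x ∧ f (Fin.last n) = t then
        chainWt ℤ rk (Fin.cons x' f : Fin (n + 2) → β) else 0 := by
    unfold lvl
    rw [← Fintype.sum_prod_type']
    refine (Fintype.sum_equiv (Fin.consEquiv (fun _ => β)) _ _ ?_).symm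
    rintro ⟨x', f⟩
    simp only [Fin.consEquiv_apply]
    refine if_congr ?_ rfl rfl
    change _ ↔ IsStrictChain lt (Fin.cons x' f : Fin (n + 2) → β) ∧ _ ∧ _
    rw [strictChain_cons lt htr]
    simp [← Fin.succ_last]
  rw [h1, Finset.sum_eq_single x]
  rotate_left
  · intro b _ hb
    refine Finset.sum_eq_zero fun f _ => if_neg ?_
    rintro ⟨_, h, _⟩; exact hb h
  · simp
  have h2 : ∀ y, (if lt x y then
      ev ℤ ^ (rk y - rk x - 1) * ((if y = t then 1 else bv ℤ) * lvl lt rk t n y) else 0)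
      = ∑ f : Fin (n + 1) → β, if (f 0 = y) then (if lt x (f 0) ∧ IsStrictChain lt f ∧
        f (Fin.last n) = t then ev ℤ ^ (rk (f 0) - rk x - 1) *
          ((if f 0 = t then 1 else bv ℤ) * chainWt ℤ rk f) else 0) else 0 := by
    intro y
    unfold lvl
    split_ifs with hxy hyt
    · rw [Finset.mul_sum, Finset.mul_sum]
      refine Finset.sum_congr rfl fun f _ => ?_
      by_cases hf : f 0 = y
      · subst hyt
        simp [hf, hxy]
      · simp [hf]
    · rw [Finset.mul_sum, Finset.mul_sum]
      refine Finset.sum_congr rfl fun f _ => ?_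
      by_cases hf : f 0 = y
      · simp [hf, hxy, hyt]
      · simp [hf]
    · symm
      refine Finset.sum_eq_zero fun f _ => ?_
      by_cases hf : f 0 = y
      · simp [hf, hxy]
      · simp [hf]
  simp_rw [h2]
  rw [Finset.sum_comm]
  refine Finset.sum_congr rfl fun f _ => ?_
  rw [Finset.sum_ite_eq]
  simp only [Finset.mem_univ, if_true, true_and, and_assoc]
  refine if_ctx_congr Iff.rfl (fun h => ?_) fun _ => rfl
  cases n with
  | zero =>
    have : f 0 = t := h.2.2
    rw [chainWt_cons_zero, if_pos this, one_mul]
  | succ n =>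
    have : f 0 ≠ t := by
      intro h0
      have := h.2.1 0 (Fin.last _) (Fin.last_pos)
      rw [h0, h.2.2] at this
      exact hirr _ this
    rw [chainWt_cons_succ, if_neg this]

theorem lvl_big (hirr : ∀ x, ¬ lt x x) (t : β) (n : ℕ) (hn : Fintype.card β ≤ n) (x : β) :
    lvl lt rk t n x = 0 := by
  refine Finset.sum_eq_zero fun f _ => if_neg ?_
  rintro ⟨h, _⟩
  have hinj : Function.Injective f := by
    intro i j hij
    rcases lt_trichotomy i j with h' | h' | h'
    · have := h _ _ h'; rw [hij] at this; exact absurd this (hirr _)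
    · exact h'
    · have := h _ _ h'; rw [hij] at this; exact absurd this (hirr _)
  have := Fintype.card_le_of_injective f hinj
  simp at this
  omega

theorem PsiRel_eq_sum (hirr : ∀ x, ¬ lt x x) (x t : β) (N : ℕ) (hN : Fintype.card β ≤ N) :
    PsiRel ℤ lt rk x t = ∑ n ∈ Finset.range N, lvl lt rk t n x := by
  rw [PsiRel_eq_lvl]
  refine finsum_eq_sum_of_support_subset _ ?_
  intro n hn
  simp only [Finset.coe_range, Set.mem_Iio]
  by_contra h
  exact hn (lvl_big lt rk hirr t n (by omega) x)

theorem PsiRel_rec (htr : ∀ x y z, lt x y → lt y z → lt x z) (hirr : ∀ x, ¬ lt x x)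
    (x t : β) :
    PsiRel ℤ lt rk x t = (if x = t then 1 else 0) + ∑ y, if lt x y then
      ev ℤ ^ (rk y - rk x - 1) * ((if y = t then 1 else bv ℤ) * PsiRel ℤ lt rk y t) else 0 := by
  rw [PsiRel_eq_sum lt rk hirr x t (Fintype.card β + 1) (by omega), Finset.sum_range_succ',
    lvl_zero, add_comm]
  congr 1
  simp_rw [lvl_succ lt rk htr hirr]
  rw [Finset.sum_comm]
  refine Finset.sum_congr rfl fun y _ => ?_
  split_ifs with h
  · rw [PsiRel_eq_sum lt rk hirr y t (Fintype.card β) le_rfl, Finset.mul_sum, Finset.mul_sum]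
  · rw [PsiRel_eq_sum lt rk hirr y t (Fintype.card β) le_rfl, Finset.mul_sum, Finset.mul_sum]
  · simp

end Recursion

/-! ### The transfer matrix -/

/-- The transfer matrix homomorphism. -/
def tmat : AB ℤ →ₐ[ℤ] Matrix (Fin 2) (Fin 2) (AB ℤ) :=
  MonoidAlgebra.lift ℤ _ ABWord (FreeMonoid.lift fun x =>
    if x then !![av ℤ + bv ℤ, av ℤ - bv ℤ; bv ℤ, av ℤ - bv ℤ]
    else !![2 * bv ℤ, av ℤ - bv ℤ; bv ℤ, 0])

theorem tmat_a : tmat (av ℤ) = !![av ℤ + bv ℤ, av ℤ - bv ℤ; bv ℤ, av ℤ - bv ℤ] := by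
  have : av ℤ = MonoidAlgebra.of ℤ ABWord (FreeMonoid.of true) := rfl
  conv_lhs => rw [this]
  rw [tmat, MonoidAlgebra.lift_of]
  simp

theorem tmat_b : tmat (bv ℤ) = !![2 * bv ℤ, av ℤ - bv ℤ; bv ℤ, 0] := by
  have : bv ℤ = MonoidAlgebra.of ℤ ABWord (FreeMonoid.of false) := rfl
  conv_lhs => rw [this]
  rw [tmat, MonoidAlgebra.lift_of]
  simp

/-- First component. -/
def F0 : AB ℤ →+ AB ℤ where
  toFun u := tmat u 0 0 * cv ℤ + tmat u 0 1 * bv ℤ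
  map_zero' := by simp
  map_add' u v := by simp only [map_add, Matrix.add_apply]; noncomm_ring

/-- Second component. -/
def F1 : AB ℤ →+ AB ℤ where
  toFun u := tmat u 1 0 * cv ℤ + tmat u 1 1 * bv ℤ
  map_zero' := by simp
  map_add' u v := by simp only [map_add, Matrix.add_apply]; noncomm_ring

theorem F0_one : F0 1 = cv ℤ := by
  change tmat 1 0 0 * cv ℤ + tmat 1 0 1 * bv ℤ = _
  simp

theorem F1_one : F1 1 = bv ℤ := by
  change tmat 1 1 0 * cv ℤ + tmat 1 1 1 * bv ℤ = _
  simp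

theorem F0_b (u : AB ℤ) : F0 (bv ℤ * u) = 2 * bv ℤ * F0 u + ev ℤ * F1 u := by
  change tmat _ 0 0 * cv ℤ + tmat _ 0 1 * bv ℤ = 2 * bv ℤ * (tmat u 0 0 * cv ℤ + tmat u 0 1 * bv ℤ)
    + ev ℤ * (tmat u 1 0 * cv ℤ + tmat u 1 1 * bv ℤ)
  rw [map_mul, tmat_b, Matrix.mul_apply, Matrix.mul_apply]
  simp [Fin.sum_univ_two, ev]
  noncomm_ring

theorem F1_b (u : AB ℤ) : F1 (bv ℤ * u) = bv ℤ * F0 u := by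
  change tmat _ 1 0 * cv ℤ + tmat _ 1 1 * bv ℤ = bv ℤ * (tmat u 0 0 * cv ℤ + tmat u 0 1 * bv ℤ)
  rw [map_mul, tmat_b, Matrix.mul_apply, Matrix.mul_apply]
  simp [Fin.sum_univ_two]
  noncomm_ring

theorem tmat_e : tmat (ev ℤ) = !![ev ℤ, 0; 0, ev ℤ] := by
  rw [ev, map_sub, tmat_a, tmat_b]
  ext i j
  fin_cases i <;> fin_cases j <;> simp [-MonoidAlgebra.coeff_add, -MonoidAlgebra.coeff_sub]
  · congr 1
    noncomm_ring

theorem F0_e (u : AB ℤ) : F0 (ev ℤ * u) = ev ℤ * F0 u := by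
  change tmat _ 0 0 * cv ℤ + tmat _ 0 1 * bv ℤ = ev ℤ * (tmat u 0 0 * cv ℤ + tmat u 0 1 * bv ℤ)
  rw [map_mul, tmat_e, Matrix.mul_apply, Matrix.mul_apply]
  simp [Fin.sum_univ_two]
  noncomm_ring

theorem F1_e (u : AB ℤ) : F1 (ev ℤ * u) = ev ℤ * F1 u := by
  change tmat _ 1 0 * cv ℤ + tmat _ 1 1 * bv ℤ = ev ℤ * (tmat u 1 0 * cv ℤ + tmat u 1 1 * bv ℤ)
  rw [map_mul, tmat_e, Matrix.mul_apply, Matrix.mul_apply]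
  simp [Fin.sum_univ_two]
  noncomm_ring

theorem F0_epow (k : ℕ) (u : AB ℤ) : F0 (ev ℤ ^ k * u) = ev ℤ ^ k * F0 u := by
  induction k with
  | zero => simp
  | succ k ih => rw [pow_succ', mul_assoc, F0_e, ih, mul_assoc]

theorem F1_epow (k : ℕ) (u : AB ℤ) : F1 (ev ℤ ^ k * u) = ev ℤ ^ k * F1 u := by
  induction k with
  | zero => simp
  | succ k ih => rw [pow_succ', mul_assoc, F1_e, ih, mul_assoc]

/-! ### Nonnegativity -/

/-- The cone of nonnegative cd-polynomials. -/
def cone : Subsemiring (AB ℤ) :=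
  (Submonoid.closure ({cv ℤ, dv ℤ} : Set (AB ℤ))).subsemiringClosure

theorem mem_cone (x : AB ℤ) : x ∈ cone ↔ x ∈ AddSubmonoid.closure
    ((Submonoid.closure ({cv ℤ, dv ℤ} : Set (AB ℤ)) : Submonoid (AB ℤ)) : Set (AB ℤ)) :=
  Iff.rfl

theorem c_mem : cv ℤ ∈ cone :=
  AddSubmonoid.subset_closure (Submonoid.subset_closure (by simp))

theorem d_mem : dv ℤ ∈ cone :=
  AddSubmonoid.subset_closure (Submonoid.subset_closure (by simp))

theorem F_step_c (u X Y Z : AB ℤ) (h0 : F0 u = X) (h1 : 2 * F1 u = X - ev ℤ * Y)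
    (hZ : X = Z + cv ℤ * Y) :
    F0 (cv ℤ * u) = cv ℤ * X + cv ℤ * Z + 2 * (dv ℤ * Y) ∧
      2 * F1 (cv ℤ * u) = (cv ℤ * X + cv ℤ * Z + 2 * (dv ℤ * Y)) - ev ℤ * X ∧
      cv ℤ * X + cv ℤ * Z + 2 * (dv ℤ * Y) = (cv ℤ * Z + 2 * (dv ℤ * Y)) + cv ℤ * X := by
  have hc : cv ℤ * u = ev ℤ * u + (bv ℤ * u + bv ℤ * u) := by
    simp only [cv, ev]; noncomm_ring
  have hZ' : Z = X - cv ℤ * Y := by rw [hZ]; abel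
  refine ⟨?_, ?_, by abel⟩
  · rw [hc, map_add, map_add, F0_b, F0_e, h0]
    have : ev ℤ * X + (2 * bv ℤ * X + ev ℤ * F1 u + (2 * bv ℤ * X + ev ℤ * F1 u)) =
      ev ℤ * X + 4 * bv ℤ * X + ev ℤ * (2 * F1 u) := by noncomm_ring
    rw [this, h1, hZ']
    simp only [cv, dv, ev]; noncomm_ring
  · rw [hc, map_add, map_add, F1_b, F1_e, h0]
    have : 2 * (ev ℤ * F1 u + (bv ℤ * X + bv ℤ * X)) =
      ev ℤ * (2 * F1 u) + 4 * bv ℤ * X := by noncomm_ring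
    rw [this, h1, hZ']
    simp only [cv, dv, ev]; noncomm_ring

theorem F_step_d (u X Y Z : AB ℤ) (h0 : F0 u = X) (h1 : 2 * F1 u = X - ev ℤ * Y)
    (hZ : X = Z + cv ℤ * Y) :
    F0 (dv ℤ * u) = 2 * (dv ℤ * X) + cv ℤ * cv ℤ * Z + 2 * (cv ℤ * dv ℤ * Y) ∧
      2 * F1 (dv ℤ * u) = (2 * (dv ℤ * X) + cv ℤ * cv ℤ * Z + 2 * (cv ℤ * dv ℤ * Y)) -
        ev ℤ * (cv ℤ * Z + 2 * (dv ℤ * Y)) ∧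
      2 * (dv ℤ * X) + cv ℤ * cv ℤ * Z + 2 * (cv ℤ * dv ℤ * Y) =
        2 * (dv ℤ * X) + cv ℤ * (cv ℤ * Z + 2 * (dv ℤ * Y)) := by
  have hd : dv ℤ * u = ev ℤ * (bv ℤ * u) + bv ℤ * (ev ℤ * u) +
      (bv ℤ * (bv ℤ * u) + bv ℤ * (bv ℤ * u)) := by
    simp only [dv, ev]; noncomm_ring
  have hZ' : Z = X - cv ℤ * Y := by rw [hZ]; abel
  refine ⟨?_, ?_, by noncomm_ring⟩
  · rw [hd]
    simp only [map_add, F0_b, F0_e, F1_b, F1_e, h0]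
    generalize F1 u = W at *
    have : ev ℤ * (2 * bv ℤ * X + ev ℤ * W) + (2 * bv ℤ * (ev ℤ * X) + ev ℤ * (ev ℤ * W)) +
        (2 * bv ℤ * (2 * bv ℤ * X + ev ℤ * W) + ev ℤ * (bv ℤ * X) +
          (2 * bv ℤ * (2 * bv ℤ * X + ev ℤ * W) + ev ℤ * (bv ℤ * X))) =
        (ev ℤ * ev ℤ + 2 * bv ℤ * ev ℤ) * (2 * W) +
        (4 * ev ℤ * bv ℤ + 2 * bv ℤ * ev ℤ + 8 * bv ℤ * bv ℤ) * X := by noncomm_ring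
    rw [this, h1, hZ']
    simp only [cv, dv, ev]; noncomm_ring
  · rw [hd]
    simp only [map_add, F0_b, F0_e, F1_b, F1_e, h0]
    generalize F1 u = W at *
    have : 2 * (ev ℤ * (bv ℤ * X) + bv ℤ * (ev ℤ * X) + (bv ℤ * (2 * bv ℤ * X + ev ℤ * W) +
        bv ℤ * (2 * bv ℤ * X + ev ℤ * W))) = 2 * bv ℤ * ev ℤ * (2 * W) +
        (2 * ev ℤ * bv ℤ + 2 * bv ℤ * ev ℤ + 8 * bv ℤ * bv ℤ) * X := by noncomm_ring
    rw [this, h1, hZ']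
    simp only [cv, dv, ev]; noncomm_ring

theorem F_mono (u : AB ℤ) (hu : u ∈ Submonoid.closure ({cv ℤ, dv ℤ} : Set (AB ℤ))) :
    ∃ X ∈ cone, ∃ Y ∈ cone, ∃ Z ∈ cone,
      F0 u = X ∧ 2 * F1 u = X - ev ℤ * Y ∧ X = Z + cv ℤ * Y := by
  have h2 : (2 : AB ℤ) ∈ cone := by
    have := add_mem (one_mem cone) (one_mem cone)
    rwa [one_add_one_eq_two] at this
  induction hu using Submonoid.closure_induction_left with
  | one =>
    refine ⟨_, c_mem, 1, one_mem _, 0, zero_mem _, F0_one, ?_, by simp⟩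
    rw [F1_one]; simp only [cv, ev]; noncomm_ring
  | mul_left x hx y hy ih =>
    obtain ⟨X, hX, Y, hY, Z, hZ, h0, h1, h3⟩ := ih
    rcases hx with rfl | rfl
    · refine ⟨_, ?_, X, hX, _, ?_, F_step_c y X Y Z h0 h1 h3⟩
      · exact add_mem (add_mem (mul_mem c_mem hX) (mul_mem c_mem hZ))
          (mul_mem h2 (mul_mem d_mem hY))
      · exact add_mem (mul_mem c_mem hZ) (mul_mem h2 (mul_mem d_mem hY))
    · refine ⟨_, ?_, _, ?_, _, ?_, F_step_d y X Y Z h0 h1 h3⟩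
      · exact add_mem (add_mem (mul_mem h2 (mul_mem d_mem hX))
          (mul_mem (mul_mem c_mem c_mem) hZ)) (mul_mem h2 (mul_mem (mul_mem c_mem d_mem) hY))
      · exact add_mem (mul_mem c_mem hZ) (mul_mem h2 (mul_mem d_mem hY))
      · exact mul_mem h2 (mul_mem d_mem hX)

theorem F0_cone (u : AB ℤ) (hu : u ∈ cone) : F0 u ∈ cone := by
  rw [mem_cone] at hu
  induction hu using AddSubmonoid.closure_induction with
  | mem x hx =>
    obtain ⟨X, hX, _, _, _, _, h0, _⟩ := F_mono x hx
    rw [h0]; exact hX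
  | zero => rw [map_zero]; exact zero_mem _
  | add x y _ _ hx hy => rw [map_add]; exact add_mem hx hy

/-! ### The order of `T(P)` -/

section Order

variable {α : Type} [Fintype α] [PartialOrder α] [BoundedOrder α]

theorem rk_strictMono (rk : α → ℕ) (hrk : IsRankFun α rk) : StrictMono rk := by
  classical
  letI : LocallyFiniteOrder α := Fintype.toLocallyFiniteOrder
  rw [strictMono_iff_forall_covBy]
  intro x y h
  rw [hrk.2 x y h]; omega

theorem TPlt_some_some {x z : WithBot α} {y w : α} (hx : x < y) (hz : z < w) :
    TPlt α (some ⟨(x, y), hx⟩) (some ⟨(z, w), hz⟩) ↔ y < w ∧ (z = x ∨ (y : WithBot α) ≤ z) := by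
  constructor
  · intro h
    have key : ∀ q : TP α, TPlt α (some ⟨(x, y), hx⟩) q → ∀ z w hz, q = some ⟨(z, w), hz⟩ →
        y < w ∧ (z = x ∨ (y : WithBot α) ≤ z) := by
      intro q hq
      induction hq with
      | single h =>
        intro z w hz hq
        cases h with
        | up h1 h2 hc =>
          cases hq
          exact ⟨hc.lt, Or.inr le_rfl⟩
        | same h1 h2 hc =>
          cases hq
          exact ⟨hc.lt, Or.inl rfl⟩
        | top h1 => cases hq
      | tail _ h ih =>
        intro z w hz hq
        cases h with
        | up h1 h2 hc =>
          cases hq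
          have := ih _ _ _ rfl
          exact ⟨this.1.trans hc.lt, Or.inr (WithBot.coe_le_coe.2 this.1.le)⟩
        | same h1 h2 hc =>
          cases hq
          have := ih _ _ _ rfl
          exact ⟨this.1.trans hc.lt, this.2⟩
        | top h1 => cases hq
    exact key _ h _ _ _ rfl
  · have same : ∀ (x : WithBot α) (y w : α) (hx : x < y) (hw : x < w), y ≤ w →
        TPle α (some ⟨(x, y), hx⟩) (some ⟨(x, w), hw⟩) := by
      intro x y w hx hw hyw
      classical
      letI : LocallyFiniteOrder α := Fintype.toLocallyFiniteOrder
      have := le_iff_reflTransGen_covBy.1 hyw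
      clear hyw
      induction this with
      | refl => exact Relation.ReflTransGen.refl
      | tail h1 h2 ih =>
        have h3 := le_iff_reflTransGen_covBy.2 h1
        exact (ih (hx.trans_le (WithBot.coe_le_coe.2 h3))).tail (TPcov.same _ _ h2)
    rintro ⟨hyw, h | h⟩
    · subst h
      rcases Relation.reflTransGen_iff_eq_or_transGen.1 (same z y w hx hz hyw.le) with h | h
      · injection h with h
        have := congrArg (fun p : TPel α => p.1.2) h
        exact absurd this hyw.ne'
      · exact h
    · cases z with
      | bot => simp at h
      | coe z =>
        have hyz : y ≤ z := WithBot.coe_le_coe.1 h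
        have hzw : z < w := WithBot.coe_lt_coe.1 hz
        have h1 := same x y z hx (hx.trans_le h) hyz
        classical
        letI : LocallyFiniteOrder α := Fintype.toLocallyFiniteOrder
        obtain ⟨v, hv, hvw⟩ := exists_covBy_le_of_lt hzw
        have hv' : (z : WithBot α) < v := WithBot.coe_lt_coe.2 hv.lt
        have h2 : TPcov α (some ⟨(x, z), hx.trans_le h⟩) (some ⟨((z : WithBot α), v), hv'⟩) :=
          TPcov.up _ _ hv
        exact (Relation.TransGen.tail' h1 h2).trans_left (same _ _ _ hv' hz hvw)

theorem TPlt_some_none (p : TPel α) : TPlt α (some p) none := by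
  obtain ⟨⟨x, y⟩, h⟩ := p
  have hx : x < ((⊤ : α) : WithBot α) := lt_of_lt_of_le h (WithBot.coe_le_coe.2 le_top)
  have ht : TPcov α (some ⟨(x, ⊤), hx⟩) none := TPcov.top hx
  rcases eq_or_ne y ⊤ with rfl | hy
  · exact Relation.TransGen.single ht
  · exact ((TPlt_some_some h hx).2 ⟨lt_top_iff_ne_top.2 hy, Or.inl rfl⟩).tail ht

theorem TPlt_none (q : TP α) : ¬ TPlt α none q := by
  intro h
  have : ∀ p q : TP α, TPlt α p q → p = none → False := by
    intro p q h
    induction h using Relation.TransGen.head_induction_on with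
    | single h => rintro rfl; cases h
    | head h _ _ => rintro rfl; cases h
  exact this _ _ h rfl

theorem TPlt_irrefl (p : TP α) : ¬ TPlt α p p := by
  cases p with
  | none => exact TPlt_none _
  | some p =>
    obtain ⟨⟨x, y⟩, h⟩ := p
    intro hh
    exact lt_irrefl _ ((TPlt_some_some h h).1 hh).1

end Order

/-! ### Comparison of the two ab-indices -/

section Main

open Classical

variable {α : Type} [Fintype α] [PartialOrder α] [BoundedOrder α]

/-- The value of the ab-index of the upper interval of `T(P)` at `[x,y]`. -/
def Qv (rk : α → ℕ) (y : α) : AB ℤ :=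
  if y = ⊤ then 1 else F0 (PsiRel ℤ (· < ·) rk y ⊤)

theorem Psi_rec (rk : α → ℕ) (x : α) (hx : x ≠ ⊤) :
    PsiRel ℤ (· < ·) rk x ⊤ = ev ℤ ^ (rk ⊤ - rk x - 1) + ∑ y, if x < y ∧ y ≠ ⊤ then
      ev ℤ ^ (rk y - rk x - 1) * (bv ℤ * PsiRel ℤ (· < ·) rk y ⊤) else 0 := by
  have htop : PsiRel ℤ (· < ·) rk (⊤ : α) ⊤ = 1 := by
    rw [PsiRel_rec (fun a b : α => a < b) rk (fun _ _ _ => lt_trans) (fun x => lt_irrefl x)]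
    simp
  rw [PsiRel_rec (fun a b : α => a < b) rk (fun _ _ _ => lt_trans) (fun x => lt_irrefl x), if_neg hx, zero_add,
    ← Finset.add_sum_erase _ _ (Finset.mem_univ (⊤ : α))]
  conv_rhs => rw [← Finset.add_sum_erase _ _ (Finset.mem_univ (⊤ : α))]
  rw [if_pos (lt_top_iff_ne_top.2 hx), if_pos rfl, htop]
  simp only [ne_eq, not_true_eq_false, and_false, if_false, zero_add, mul_one]
  congr 1
  refine Finset.sum_congr rfl fun y hy => ?_
  have : y ≠ ⊤ := by simpa using hy
  simp [this]

theorem F1_Psi (rk : α → ℕ) (x : α) (hx : x ≠ ⊤) :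
    F1 (PsiRel ℤ (· < ·) rk x ⊤) = ∑ w, if x < w then
      ev ℤ ^ (rk w - rk x - 1) * (bv ℤ * Qv rk w) else 0 := by
  rw [Psi_rec rk x hx, map_add, map_sum, ← mul_one (ev ℤ ^ (rk ⊤ - rk x - 1)), F1_epow, F1_one]
  conv_rhs => rw [← Finset.add_sum_erase _ _ (Finset.mem_univ (⊤ : α))]
  rw [← Finset.add_sum_erase _ _ (Finset.mem_univ (⊤ : α))]
  simp only [ne_eq, not_true_eq_false, and_false, if_false, map_zero, zero_add]
  rw [if_pos (lt_top_iff_ne_top.2 hx)]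
  simp only [Qv, if_true, mul_one]
  congr 1
  refine Finset.sum_congr rfl fun y hy => ?_
  have : y ≠ ⊤ := by simpa using hy
  by_cases h : x < y
  · simp [this, h, F1_epow, F1_b]
  · simp [h]

theorem F0_Psi (rk : α → ℕ) (x : α) (hx : x ≠ ⊤) :
    F0 (PsiRel ℤ (· < ·) rk x ⊤) = ev ℤ ^ (rk ⊤ - rk x - 1) * (av ℤ - bv ℤ) +
      2 * (∑ w, if x < w then ev ℤ ^ (rk w - rk x - 1) * (bv ℤ * Qv rk w) else 0) +
      ∑ y, if x < y ∧ y ≠ ⊤ then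
        ev ℤ ^ (rk y - rk x - 1) * (ev ℤ * F1 (PsiRel ℤ (· < ·) rk y ⊤)) else 0 := by
  rw [Psi_rec rk x hx, map_add, map_sum, ← mul_one (ev ℤ ^ (rk ⊤ - rk x - 1)), F0_epow, F0_one]
  rw [← Finset.add_sum_erase _ (fun w => if x < w then
    ev ℤ ^ (rk w - rk x - 1) * (bv ℤ * Qv rk w) else 0) (Finset.mem_univ (⊤ : α))]
  have hs : ∀ g : α → AB ℤ, (∑ y, if x < y ∧ y ≠ ⊤ then g y else 0) =
      ∑ y ∈ Finset.univ.erase (⊤ : α), if x < y then g y else 0 := by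
    intro g
    rw [← Finset.add_sum_erase _ _ (Finset.mem_univ (⊤ : α))]
    simp only [ne_eq, not_true_eq_false, and_false, if_false, zero_add]
    refine Finset.sum_congr rfl fun y hy => ?_
    have : y ≠ ⊤ := by simpa using hy
    simp [this]
  rw [hs]
  simp only [apply_ite F0, map_zero]
  rw [hs, if_pos (lt_top_iff_ne_top.2 hx), mul_add, Finset.mul_sum, add_assoc, add_assoc,
    ← Finset.sum_add_distrib, ← add_assoc]
  congr 1
  · simp only [Qv, if_true, cv]; noncomm_ring
  · refine Finset.sum_congr rfl fun y hy => ?_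
    have : y ≠ ⊤ := by simpa using hy
    by_cases h : x < y
    · simp only [h, if_true, F0_epow, F0_b, Qv, this, if_false]
      noncomm_ring
    · simp [h]

theorem Qv_rec (rk : α → ℕ) (hrk : StrictMono rk) (x : α) :
    Qv rk x = ev ℤ ^ (rk ⊤ - rk x) + ∑ w, if x < w then
      (2 + (Finset.univ.filter fun y => x < y ∧ y < w).card) •
        (ev ℤ ^ (rk w - rk x - 1) * (bv ℤ * Qv rk w)) else 0 := by
  by_cases hx : x = ⊤
  · subst hx; simp [Qv]
  have hlt : rk x < rk ⊤ := hrk (lt_top_iff_ne_top.2 hx)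
  conv_lhs => rw [Qv, if_neg hx, F0_Psi rk x hx]
  rw [add_assoc]
  congr 1
  · rw [← ev, ← pow_succ]; congr 1; omega
  have h3 : ∀ w, (if x < w then (2 + (Finset.univ.filter fun y => x < y ∧ y < w).card) •
        (ev ℤ ^ (rk w - rk x - 1) * (bv ℤ * Qv rk w)) else 0) =
      2 * (if x < w then ev ℤ ^ (rk w - rk x - 1) * (bv ℤ * Qv rk w) else 0) +
      ∑ y, if x < y ∧ y < w then ev ℤ ^ (rk w - rk x - 1) * (bv ℤ * Qv rk w) else 0 := by
    intro w
    rw [← Finset.sum_filter, Finset.sum_const]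
    split_ifs with h
    · rw [add_smul, two_smul, two_mul]
    · have : (Finset.univ.filter fun y => x < y ∧ y < w) = ∅ := by
        ext y; simp; intro h1 h2; exact h (h1.trans h2)
      simp [this]
  simp_rw [h3]
  rw [Finset.sum_add_distrib, Finset.mul_sum]
  congr 1
  rw [Finset.sum_comm]
  refine Finset.sum_congr rfl fun y _ => ?_
  split_ifs with h
  · rw [F1_Psi rk y h.2, Finset.mul_sum, Finset.mul_sum]
    refine Finset.sum_congr rfl fun w _ => ?_
    by_cases hw : y < w
    · simp only [h.1, hw, true_and, if_true]
      rw [← mul_assoc, ← mul_assoc, ← pow_succ, ← pow_add]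
      congr 2
      have := hrk h.1
      have := hrk hw
      omega
    · simp [hw]
  · symm
    refine Finset.sum_eq_zero fun w _ => if_neg ?_
    rintro ⟨h1, h2⟩
    exact h ⟨h1, (h2.trans_le le_top).ne⟩

instance : Fintype (TPel α) := by unfold TPel; exact Fintype.ofFinite _

instance : Fintype (TP α) := by unfold TP; infer_instance

/-- The interval `[x,y]`. -/
def mkE (x : WithBot α) (y : α) (hx : x < y) : TPel α := ⟨(x, y), hx⟩

/-- An interval as an element of `T(P)`. -/
def mkT (p : TPel α) : TP α := some p

/-- The upper end. -/
def upE (p : TPel α) : α := p.1.2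

theorem TPlt_mk {x z : WithBot α} {y w : α} (hx : x < y) (hz : z < w) :
    TPlt α (mkT (mkE x y hx)) (mkT (mkE z w hz)) ↔ y < w ∧ (z = x ∨ (y : WithBot α) ≤ z) :=
  TPlt_some_some hx hz

theorem mkT_ne (p : TPel α) : mkT p ≠ TPtop α := Option.some_ne_none _

theorem sum_TP (g : TP α → AB ℤ) : ∑ p, g p = g (TPtop α) + ∑ p : TPel α, g (mkT p) :=
  Fintype.sum_option (α := TPel α) g

theorem card_first {x : WithBot α} {y w : α} (hx : x < y) (hw : y < w) :
    (Finset.univ.filter fun z : WithBot α => z < w ∧ (z = x ∨ (y : WithBot α) ≤ z)).card =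
      2 + (Finset.univ.filter fun u => y < u ∧ u < w).card := by
  have hw' : (y : WithBot α) < w := WithBot.coe_lt_coe.2 hw
  have : (Finset.univ.filter fun z : WithBot α => z < w ∧ (z = x ∨ (y : WithBot α) ≤ z)) =
      insert x (insert (y : WithBot α)
        ((Finset.univ.filter fun u => y < u ∧ u < w).map ⟨_, WithBot.coe_injective⟩)) := by
    ext z
    simp only [Finset.mem_filter, Finset.mem_univ, true_and, Finset.mem_insert, Finset.mem_map,
      Function.Embedding.coeFn_mk]
    constructor
    · rintro ⟨h1, h2 | h2⟩
      · exact Or.inl h2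
      · rcases h2.eq_or_lt with h2 | h2
        · exact Or.inr (Or.inl h2.symm)
        · cases z with
          | bot => simp at h2
          | coe z =>
            exact Or.inr (Or.inr ⟨z, ⟨WithBot.coe_lt_coe.1 h2, WithBot.coe_lt_coe.1 h1⟩, rfl⟩)
    · rintro (rfl | rfl | ⟨u, ⟨h1, h2⟩, rfl⟩)
      · exact ⟨hx.trans hw', Or.inl rfl⟩
      · exact ⟨hw', Or.inr le_rfl⟩
      · exact ⟨WithBot.coe_lt_coe.2 h2, Or.inr (WithBot.coe_le_coe.2 h1.le)⟩
  rw [this, Finset.card_insert_of_notMem, Finset.card_insert_of_notMem, Finset.card_map]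
  · omega
  · simp
  · simp only [Finset.mem_insert, Finset.mem_map, Finset.mem_filter, Finset.mem_univ, true_and,
      Function.Embedding.coeFn_mk, not_or, not_exists, not_and]
    refine ⟨hx.ne, ?_⟩
    rintro u ⟨h1, h2⟩ rfl
    exact lt_asymm h1 (WithBot.coe_lt_coe.1 hx)

theorem sum_TPel (x : WithBot α) (y : α) (hx : x < y) (g : α → AB ℤ) :
    (∑ p : TPel α, if TPlt α (mkT (mkE x y hx)) (mkT p) then g (upE p) else 0) =
      ∑ w, if y < w then (2 + (Finset.univ.filter fun u => y < u ∧ u < w).card) • g w else 0 := by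
  have h1 : (∑ p : TPel α, if TPlt α (mkT (mkE x y hx)) (mkT p) then g (upE p) else 0) =
      ∑ p : WithBot α × α, if p.1 < p.2 ∧ y < p.2 ∧ (p.1 = x ∨ (y : WithBot α) ≤ p.1) then
        g p.2 else 0 := by
    rw [← Finset.sum_filter (s := (Finset.univ : Finset (WithBot α × α))),
      ← Finset.sum_filter]
    refine Finset.sum_bij (fun p _ => p.1) ?_ ?_ ?_ ?_
    · rintro ⟨⟨z, w⟩, hz⟩ hp
      have hp' := (Finset.mem_filter.1 hp).2
      exact Finset.mem_filter.2 ⟨Finset.mem_univ _, hz, (TPlt_mk hx hz).1 hp'⟩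
    · intro p _ q _ h
      exact Subtype.ext h
    · rintro ⟨z, w⟩ hp
      simp only [Finset.mem_filter, Finset.mem_univ, true_and] at hp
      exact ⟨mkE z w hp.1, Finset.mem_filter.2 ⟨Finset.mem_univ _, (TPlt_mk hx hp.1).2 hp.2⟩, rfl⟩
    · intro p _; rfl
  rw [h1, Fintype.sum_prod_type, Finset.sum_comm]
  refine Finset.sum_congr rfl fun w _ => ?_
  split_ifs with h
  · rw [← card_first hx h, ← Finset.sum_const, Finset.sum_filter]
    refine Finset.sum_congr rfl fun z _ => ?_
    simp [h]
  · simp [h]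

theorem Psi_TP (rk : α → ℕ) (hrk : StrictMono rk) (y : α) :
    ∀ (x : WithBot α) (hx : x < y),
      PsiRel ℤ (TPlt α) (TPrk α rk) (mkT (mkE x y hx)) (TPtop α) = Qv rk y := by
  induction y using WellFoundedGT.induction with
  | ind y ih =>
    intro x hx
    have htr : ∀ x y z, TPlt α x y → TPlt α y z → TPlt α x z :=
      fun _ _ _ h1 h2 => Relation.TransGen.trans h1 h2
    have htop : PsiRel ℤ (TPlt α) (TPrk α rk) (TPtop α) (TPtop α) = 1 := by
      rw [PsiRel_rec _ _ htr TPlt_irrefl, if_pos rfl]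
      have : ∀ q, ¬ TPlt α (TPtop α) q := TPlt_none
      simp [this]
    rw [PsiRel_rec _ _ htr TPlt_irrefl, if_neg (mkT_ne _), zero_add, sum_TP,
      if_pos (show TPlt α (mkT (mkE x y hx)) (TPtop α) from TPlt_some_none _), if_pos rfl, htop, Qv_rec rk hrk y, ← sum_TPel x y hx
        (fun w => ev ℤ ^ (rk w - rk y - 1) * (bv ℤ * Qv rk w))]
    congr 1
    · rw [mul_one, mul_one]
      congr 1
      change rk ⊤ + 1 - rk y - 1 = _
      omega
    · refine Finset.sum_congr rfl fun p _ => ?_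
      refine if_ctx_congr Iff.rfl (fun h => ?_) fun _ => rfl
      rw [if_neg (mkT_ne _)]
      obtain ⟨⟨z, w⟩, hz⟩ := p
      have h' := ih w ((TPlt_mk hx hz).1 h).1 z hz
      change _ * (_ * PsiRel ℤ (TPlt α) (TPrk α rk) (mkT (mkE z w hz)) (TPtop α)) = _
      rw [h']
      rfl

end Main

theorem tchebyshev_preserves_nonneg_cd
    (α : Type) [Fintype α] [PartialOrder α] [BoundedOrder α]
    (rk : α → ℕ) (hrk : IsRankFun α rk) (heu : IsEulerian α rk)
    (hpos : PsiRel ℤ (· < ·) rk (⊥ : α) (⊤ : α) ∈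
      AddSubmonoid.closure
        ((Submonoid.closure ({cv ℤ, dv ℤ} : Set (AB ℤ)) : Submonoid (AB ℤ)) :
          Set (AB ℤ))) :
    PsiRel ℤ (TPlt α) (TPrk α rk) (TPbot α) (TPtop α) ∈
      AddSubmonoid.closure
        ((Submonoid.closure ({cv ℤ, dv ℤ} : Set (AB ℤ)) : Submonoid (AB ℤ)) :
          Set (AB ℤ)) := by
  rw [← mem_cone] at hpos ⊢
  have h := Psi_TP rk (rk_strictMono rk hrk) (⊥ : α) ⊥ (WithBot.bot_lt_coe _)
  change PsiRel ℤ (TPlt α) (TPrk α rk) (mkT (mkE ⊥ ⊥ (WithBot.bot_lt_coe _))) (TPtop α) ∈ cone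
  rw [h, Qv]
  split_ifs
  · exact one_mem _
  · exact F0_cone _ hpos


end Tcheb
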